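/- arXiv:2308.00840 — 2 statements merged into one kernel-verified Lean document; each statement's English description precedes it below -/
import Mathlib

section
/- The minimum weight of a vertex cover of the bipartite double cover G_B of G equals twice the optimal (minimum) value of the vertex-cover LP of G. -/
/-- The bipartite double cover of a graph `G`: vertices are `V ⊕ V`, with `Sum.inl u`
adjacent to `Sum.inr v` whenever `u` and `v` are adjacent in `G`. -/
def doubleCover {V : Type*} (G : SimpleGraph V) : SimpleGraph (V ⊕ V) :=
  SimpleGraph.fromRel (fun a b => ∃ u v, G.Adj u v ∧ a = Sum.inl u ∧ b = Sum.inr v)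

/-!
Averaging over the two copies of each vertex turns a fractional vertex cover of the double cover
into one of `G` of half the value, and duplicating values goes back, so it suffices that no
fractional vertex cover of a bipartite graph is lighter than every vertex cover. If `x` gives every
edge at least `d > 0`, the vertices with `0 < x` on the left and those with `d ≤ x` on the right
form a vertex cover, and subtracting a small `ε` from `x` on it leaves at least `d - ε` on every
edge. Taking for `ε` the least of `d` and the positive values of `x` on the left, either nothing
remains to be covered or the support on the left shrinks. Iterating bounds `x` below by a
combination of vertex covers with total coefficient `d`.
-/

section FractionalVertexCover

variable {V K : Type*}

/-- The fractional vertex covers of `G` in which the values at the ends of every edge sum to at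
least `d`; the feasible points of the vertex-cover LP are those with `d = 1`. The demand `d` is a
parameter because it decreases when a vertex cover is subtracted. -/
structure IsFractionalVertexCover [AddZeroClass K] [LE K] (G : SimpleGraph V) (d : K)
    (x : V → K) : Prop where
  nonneg : ∀ v, 0 ≤ x v
  le_add_of_adj : ∀ ⦃u v⦄, G.Adj u v → d ≤ x u + x v

theorem isFractionalVertexCover_indicator_one [Semiring K] [PartialOrder K] [IsOrderedRing K]
    {G : SimpleGraph V} {S : Set V} (hS : G.IsVertexCover S) :
    IsFractionalVertexCover G 1 (S.indicator (1 : V → K)) := by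
  have nonneg : ∀ v, 0 ≤ S.indicator (1 : V → K) v := Set.indicator_nonneg fun _ _ => zero_le_one
  refine ⟨nonneg, fun u v huv => ?_⟩
  rcases hS huv with hu | hv
  · exact le_add_of_le_of_nonneg (by simp [hu]) (nonneg v)
  · exact le_add_of_nonneg_of_le (nonneg u) (by simp [hv])

theorem sum_mul_indicator_one [Fintype V] [NonAssocSemiring K] (w : V → K) (S : Finset V) :
    ∑ v, w v * (S : Set V).indicator 1 v = ∑ v ∈ S, w v := by
  classical simp [Set.indicator_apply]

section Bipartite

variable {G : SimpleGraph V} {s t : Set V} {d : K} {x : V → K}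

/-- The rounding of a fractional vertex cover `x` with demand `d` in a bipartite graph with parts
`s` and `t`: the support of `x` in `s` together with the superlevel set `d ≤ x` in `t`. -/
def thresholdCover [Zero K] [Preorder K] (s t : Set V) (d : K) (x : V → K) : Set V :=
  {v ∈ s | 0 < x v} ∪ {v ∈ t | d ≤ x v}

theorem isVertexCover_thresholdCover [AddZeroClass K] [PartialOrder K]
    (hG : G.IsBipartiteWith s t) (hx : IsFractionalVertexCover G d x) :
    G.IsVertexCover (thresholdCover s t d x) := by
  have of_mem : ∀ u ∈ s, ∀ v ∈ t, G.Adj u v →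
      u ∈ thresholdCover s t d x ∨ v ∈ thresholdCover s t d x := by
    intro u hu v hv huv
    rcases (hx.nonneg u).lt_or_eq with hpos | hzero
    · exact .inl (.inl ⟨hu, hpos⟩)
    · exact .inr (.inr ⟨hv, by simpa [← hzero] using hx.le_add_of_adj huv⟩)
  intro u v huv
  rcases hG.mem_of_adj huv with ⟨hu, hv⟩ | ⟨hu, hv⟩
  · exact of_mem u hu v hv huv
  · exact (of_mem v hv u hu huv.symm).symm

theorem IsFractionalVertexCover.sub_indicator_thresholdCover [AddCommGroup K] [PartialOrder K]
    [IsOrderedAddMonoid K] (hx : IsFractionalVertexCover G d x) (hG : G.IsBipartiteWith s t)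
    {ε : K} (hεd : ε ≤ d) (hεx : ∀ v ∈ s, 0 < x v → ε ≤ x v) :
    IsFractionalVertexCover G (d - ε) (x - (thresholdCover s t d x).indicator fun _ => ε) := by
  set S := thresholdCover s t d x
  set y := x - S.indicator fun _ => ε
  have nonneg : ∀ v, 0 ≤ y v := by
    refine fun v => sub_nonneg.2 (Set.indicator_apply_le' ?_ fun _ => hx.nonneg v)
    rintro (⟨hv, hpos⟩ | ⟨-, hdv⟩)
    exacts [hεx v hv hpos, hεd.trans hdv]
  have apply_mem : ∀ v ∈ S, y v = x v - ε := fun v hv => by simp [y, hv]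
  have apply_notMem : ∀ v ∉ S, y v = x v := fun v hv => by simp [y, hv]
  have of_mem : ∀ u, ∀ v ∈ t, G.Adj u v → d - ε ≤ y u + y v := by
    intro u v hv huv
    have hd := sub_le_sub_right (hx.le_add_of_adj huv) ε
    by_cases hvS : v ∈ S
    · by_cases huS : u ∈ S
      · have hdv : d ≤ x v := (hvS.resolve_left fun h => hG.disjoint.notMem_of_mem_left h.1 hv).2
        rw [apply_mem v hvS]
        exact le_add_of_nonneg_of_le (nonneg u) (sub_le_sub_right hdv ε)
      · rwa [apply_notMem u huS, apply_mem v hvS, ← add_sub_assoc]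
    · have huS : u ∈ S := (isVertexCover_thresholdCover hG hx huv).resolve_right hvS
      rwa [apply_mem u huS, apply_notMem v hvS, sub_add_eq_add_sub]
  refine ⟨nonneg, fun u v huv => ?_⟩
  rcases hG.mem_of_adj huv with ⟨-, hv⟩ | ⟨hu, -⟩
  · exact of_mem u v hv huv
  · exact (of_mem v u hu huv.symm).trans_eq (add_comm _ _)

theorem exists_min_demand_or_pos_value [Finite V] [Zero K] [LinearOrder K] (s : Set V) (x : V → K)
    (hd : 0 < d) :
    ∃ ε, 0 < ε ∧ ε ≤ d ∧ (∀ v ∈ s, 0 < x v → ε ≤ x v) ∧ (ε = d ∨ ∃ v ∈ s, x v = ε) := by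
  obtain ⟨ε, hε, hmin⟩ := Set.exists_min_image (insert d (x '' {v ∈ s | 0 < x v})) id
    (Set.toFinite _) (Set.insert_nonempty _ _)
  refine ⟨ε, ?_, hmin d (Set.mem_insert _ _),
    fun v hv hpos => hmin (x v) (.inr ⟨v, ⟨hv, hpos⟩, rfl⟩), ?_⟩
  · obtain rfl | ⟨v, ⟨-, hpos⟩, rfl⟩ := hε
    exacts [hd, hpos]
  · exact hε.imp_right fun ⟨v, ⟨hv, _⟩, hvε⟩ => ⟨v, hv, hvε⟩

variable [Fintype V]

theorem mul_le_sum_mul_of_sub_indicator [CommRing K] [PartialOrder K] [IsOrderedRing K]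
    {w : V → K} {S : Set V} {c ε : K} (hε : 0 ≤ ε) (hc : c ≤ ∑ v, S.indicator w v)
    (h : (d - ε) * c ≤ ∑ v, w v * (x - S.indicator fun _ => ε) v) :
    d * c ≤ ∑ v, w v * x v := by
  calc d * c = (d - ε) * c + ε * c := by ring
    _ ≤ ∑ v, w v * (x - S.indicator fun _ => ε) v + ε * ∑ v, S.indicator w v :=
      add_le_add h (mul_le_mul_of_nonneg_left hc hε)
    _ = ∑ v, w v * x v := by
      rw [Finset.mul_sum, ← Finset.sum_add_distrib]
      refine Finset.sum_congr rfl fun v _ => ?_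
      by_cases hv : v ∈ S
      · simp only [Pi.sub_apply, Set.indicator_of_mem hv]
        ring
      · simp [hv]

/-- Integrality of the vertex-cover LP of a bipartite graph, scaled to demand `d`. -/
theorem IsFractionalVertexCover.mul_le_sum_mul_of_isBipartiteWith [CommRing K] [LinearOrder K]
    [IsOrderedRing K] (hx : IsFractionalVertexCover G d x) (hG : G.IsBipartiteWith s t)
    (hd : 0 ≤ d) {w : V → K} (hw : ∀ v, 0 ≤ w v) {c : K}
    (hc : ∀ S, G.IsVertexCover S → c ≤ ∑ v, S.indicator w v) :
    d * c ≤ ∑ v, w v * x v := by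
  have sum_nonneg {d : K} {x : V → K} (hx : IsFractionalVertexCover G d x) :
      0 ≤ ∑ v, w v * x v :=
    Finset.sum_nonneg fun v _ => mul_nonneg (hw v) (hx.nonneg v)
  induction hn : {v ∈ s | 0 < x v}.ncard using Nat.strong_induction_on generalizing d x with
  | _ n ih =>
    subst hn
    obtain rfl | hd := hd.eq_or_lt
    · simpa using sum_nonneg hx
    obtain ⟨ε, hε, hεd, hεx, hε_eq⟩ := exists_min_demand_or_pos_value s x hd
    have hy := hx.sub_indicator_thresholdCover hG hεd hεx
    refine mul_le_sum_mul_of_sub_indicator hε.le (hc _ (isVertexCover_thresholdCover hG hx)) ?_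
    obtain rfl | ⟨v, hv, rfl⟩ := hε_eq
    · simpa using sum_nonneg hy
    · refine ih _ (Set.ncard_lt_ncard ⟨?_, fun h => ?_⟩) hy (sub_nonneg.2 hεd) rfl
      · have indicator_nonneg := Set.indicator_nonneg (s := thresholdCover s t d x)
          fun (_ : V) _ => hε.le
        exact fun u ⟨hu, hpos⟩ => ⟨hu, hpos.trans_le (sub_le_self _ (indicator_nonneg u))⟩
      · have hvS : v ∈ thresholdCover s t d x := .inl ⟨hv, hε⟩
        simpa [hvS] using (h ⟨hv, hε⟩).2

end Bipartite

section DoubleCover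

variable {G : SimpleGraph V}

theorem doubleCover_eq_bipartiteDoubleCover (G : SimpleGraph V) :
    doubleCover G = G.bipartiteDoubleCover := by
  ext (u | u) (v | v) <;> simp [doubleCover, G.adj_comm]

theorem doubleCover_isBipartiteWith (G : SimpleGraph V) :
    (doubleCover G).IsBipartiteWith (Set.range Sum.inl) (Set.range Sum.inr) where
  disjoint := Set.isCompl_range_inl_range_inr.disjoint
  mem_of_adj := by
    rw [doubleCover_eq_bipartiteDoubleCover]
    rintro (u | u) (v | v) <;> simp

theorem IsFractionalVertexCover.sumElim_doubleCover [AddZeroClass K] [LE K] {d : K} {x : V → K}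
    (hx : IsFractionalVertexCover G d x) :
    IsFractionalVertexCover (doubleCover G) d (Sum.elim x x) where
  nonneg := Sum.forall.2 ⟨hx.nonneg, hx.nonneg⟩
  le_add_of_adj := by
    rw [doubleCover_eq_bipartiteDoubleCover]
    rintro (u | u) (v | v) huv
    exacts [huv.elim, hx.le_add_of_adj huv, hx.le_add_of_adj huv, huv.elim]

theorem IsFractionalVertexCover.average_of_doubleCover [Field K] [LinearOrder K]
    [IsStrictOrderedRing K] {d : K} {y : V ⊕ V → K}
    (hy : IsFractionalVertexCover (doubleCover G) d y) :
    IsFractionalVertexCover G d fun v => (y (.inl v) + y (.inr v)) / 2 where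
  nonneg v := div_nonneg (add_nonneg (hy.nonneg _) (hy.nonneg _)) zero_le_two
  le_add_of_adj u v huv := by
    rw [doubleCover_eq_bipartiteDoubleCover] at hy
    have h₁ : d ≤ y (.inl u) + y (.inr v) := hy.le_add_of_adj huv
    have h₂ : d ≤ y (.inr u) + y (.inl v) := hy.le_add_of_adj huv
    linarith

theorem sum_sumElim_mul_sumElim [Fintype V] [NonAssocSemiring K] (w x : V → K) :
    ∑ a, Sum.elim w w a * Sum.elim x x a = 2 * ∑ v, w v * x v := by
  simp [two_mul]

theorem sum_mul_average [Fintype V] [Field K] (w : V → K) (y : V ⊕ V → K) :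
    ∑ v, w v * ((y (.inl v) + y (.inr v)) / 2) = (∑ a, Sum.elim w w a * y a) / 2 := by
  simp [mul_add, mul_div_assoc', ← Finset.sum_div, Finset.sum_add_distrib]

end DoubleCover

theorem doubleCover_vcStar_eq_two_mul_LP_opt_general [Fintype V] [Field K] [LinearOrder K]
    [IsStrictOrderedRing K] (G : SimpleGraph V) (w : V → K) (hw : ∀ v, 0 ≤ w v) (vcB : K)
    (hvcB : IsLeast {r : K | ∃ S : Finset (V ⊕ V),
      (∀ a b, (doubleCover G).Adj a b → a ∈ S ∨ b ∈ S) ∧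
      r = ∑ a ∈ S, Sum.elim w w a} vcB) :
    IsLeast {r : K | ∃ x : V → K,
      (∀ v, 0 ≤ x v) ∧ (∀ u v, G.Adj u v → 1 ≤ x u + x v) ∧
      r = ∑ v, w v * x v} (vcB / 2) := by
  constructor
  · obtain ⟨S, hS, rfl⟩ := hvcB.1
    have hcover : (doubleCover G).IsVertexCover S := hS
    have hx := (isFractionalVertexCover_indicator_one (K := K) hcover).average_of_doubleCover
    refine ⟨_, hx.nonneg, hx.le_add_of_adj, ?_⟩
    rw [sum_mul_average, sum_mul_indicator_one]
  · rintro _ ⟨x, hx_nonneg, hx_adj, rfl⟩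
    have hx : IsFractionalVertexCover G 1 x := ⟨hx_nonneg, hx_adj⟩
    have hle : vcB ≤ 2 * ∑ v, w v * x v := by
      rw [← sum_sumElim_mul_sumElim, ← one_mul vcB]
      refine hx.sumElim_doubleCover.mul_le_sum_mul_of_isBipartiteWith
        (doubleCover_isBipartiteWith G) zero_le_one (Sum.forall.2 ⟨hw, hw⟩)
        fun S hS => ?_
      lift S to Finset (V ⊕ V) using S.toFinite
      exact hvcB.2 ⟨S, hS, Finset.sum_indicator_subset _ S.subset_univ⟩
    linarith

end FractionalVertexCover

/-- The minimum weight of a vertex cover of the bipartite double cover of `G`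
equals twice the optimal value of the vertex-cover LP of `G`. -/
theorem doubleCover_vcStar_eq_two_mul_LP_opt {V : Type*} [Fintype V] [DecidableEq V]
    (G : SimpleGraph V) (w : V → ℝ) (hw : ∀ v, 0 < w v)
    (vcB lp : ℝ)
    (hvcB : IsLeast {r : ℝ | ∃ S : Finset (V ⊕ V),
      (∀ a b, (doubleCover G).Adj a b → a ∈ S ∨ b ∈ S) ∧
      r = ∑ a ∈ S, Sum.elim w w a} vcB)
    (hlp : IsLeast {r : ℝ | ∃ x : V → ℝ,
      (∀ v, 0 ≤ x v) ∧ (∀ u v, G.Adj u v → 1 ≤ x u + x v) ∧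
      r = ∑ v, w v * x v} lp) :
    vcB = 2 * lp := by
  linarith [hlp.unique
    (doubleCover_vcStar_eq_two_mul_LP_opt_general G w (fun v => (hw v).le) vcB hvcB)]
end

section
/- Let x be an optimal half-integral solution of the vertex-cover LP of G, with V_{1/2} and V_1 the sets of vertices where x equals 1/2 and 1 respectively. Then vc*(G) = vc*(G[V_{1/2}]) + w(V_1), where vc* denotes the minimum weight of a vertex cover and G[V_{1/2}] is the induced subgraph of G on V_{1/2} with inherited weights. -/
/-!
Let `x` be an optimal fractional cover and `C` a vertex cover. Raising `x` by a small `ε` on the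
vertices of `C` with `x < 1/2` and lowering it by `ε` on the vertices outside `C` with `x > 1/2`
keeps it feasible: a lowered vertex has all its neighbours in `C`, and each of these is either
raised or has value at least `1/2`. By optimality the raised vertices weigh at least as much as the
lowered ones, so exchanging them turns `C` into a cover of no larger weight, namely the vertices
with `x > 1/2` together with the part of `C` where `x = 1/2`. That part can be replaced by any cover
of the subgraph induced on `x = 1/2`, since every edge avoiding `x > 1/2` lies in this subgraph.
-/

open Finset

theorem exists_pos_forall_le_sub {ι α : Type*} [Finite ι] [AddCommGroup α] [LinearOrder α]
    [IsOrderedAddMonoid α] [Nontrivial α] (f : ι → α) (a : α) :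
    ∃ ε > 0, ∀ i, a < f i → ε ≤ f i - a := by
  obtain ⟨⟨ε, hε⟩, hε_le⟩ :=
    Finite.exists_ge fun i : {i // a < f i} => (⟨f i - a, sub_pos.2 i.2⟩ : Set.Ioi (0 : α))
  exact ⟨ε, hε, fun i hi => hε_le ⟨i, hi⟩⟩

theorem sum_filter_lt_add_eq_add_gt {ι α M : Type*} [LinearOrder α] [AddCommMonoid M]
    (s : Finset ι) (f : ι → α) (a : α) (g : ι → M) :
    ∑ i ∈ s with f i < a, g i + ∑ i ∈ s with f i = a, g i + ∑ i ∈ s with a < f i, g i =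
      ∑ i ∈ s, g i := by
  classical
  rw [← sum_filter_add_sum_filter_not s (fun i => f i ≤ a)]
  simp only [not_le]
  congr 1
  rw [← sum_union (disjoint_filter.2 fun _ _ hlt heq => hlt.ne heq), ← filter_or]
  simp only [le_iff_lt_or_eq]

section VertexCoverWithin

variable {V : Type*} {G : SimpleGraph V}

/-- `C` covers every edge of `G` with both ends in `U`. For `C ⊆ U` this says that `C` is a vertex
cover of `G[U]`; it is stated for sets of vertices of `G` to avoid the subtype `U`. -/
def IsVertexCoverWithin (G : SimpleGraph V) (U C : Set V) : Prop :=
  ∀ u v, u ∈ U → v ∈ U → G.Adj u v → u ∈ C ∨ v ∈ C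

theorem IsVertexCoverWithin.of_isVertexCover {C : Set V} (hC : G.IsVertexCover C) (U : Set V) :
    IsVertexCoverWithin G U (C ∩ U) :=
  fun _ _ hu hv huv => (hC huv).imp (⟨·, hu⟩) (⟨·, hv⟩)

end VertexCoverWithin

section FractionalVertexCover

variable {V K : Type*} [Field K] [LinearOrder K]

/-- A feasible assignment for the vertex-cover linear program of `G`. -/
structure IsFractionalVertexCover_s12 (G : SimpleGraph V) (x : V → K) : Prop where
  nonneg : ∀ v, 0 ≤ x v
  one_le_add : ∀ u v, G.Adj u v → 1 ≤ x u + x v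

/-- The direction in which a fractional vertex cover `x` is moved towards a vertex cover `C`: up on
the vertices of `C` below `1/2`, down on the vertices outside `C` above `1/2`. -/
def exchangeDirection [DecidableEq V] (x : V → K) (C : Finset V) (v : V) : K :=
  if v ∈ C then if x v < 1 / 2 then 1 else 0 else if 1 / 2 < x v then -1 else 0

theorem dotProduct_exchangeDirection [Fintype V] [DecidableEq V] (w x : V → K) (C : Finset V) :
    w ⬝ᵥ exchangeDirection x C =
      ∑ v ∈ C with x v < 1 / 2, w v - ∑ v ∈ ({v | 1 / 2 < x v} : Finset V) \ C, w v := by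
  have hraised : ({v ∈ C | x v < 1 / 2} : Finset V) =
      ({v | v ∈ C ∧ x v < 1 / 2} : Finset V) := by
    ext; simp
  have hlowered : ({v | 1 / 2 < x v} : Finset V) \ C =
      ({v | v ∉ C ∧ 1 / 2 < x v} : Finset V) := by
    ext; simp [and_comm]
  rw [hraised, hlowered, sum_filter, sum_filter, ← sum_sub_distrib]
  refine sum_congr rfl fun v _ => ?_
  unfold exchangeDirection
  grind

variable [IsStrictOrderedRing K] {G : SimpleGraph V} {x : V → K}

theorem IsFractionalVertexCover_s12.isVertexCover_union (hx : IsFractionalVertexCover_s12 G x) {C : Set V}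
    (hC : IsVertexCoverWithin G {v | x v = 1 / 2} C) :
    G.IsVertexCover (C ∪ {v | 1 / 2 < x v}) := by
  intro u v huv
  by_contra! hout
  simp only [Set.mem_union, Set.mem_ofPred_eq, not_or, not_lt] at hout
  obtain ⟨⟨huC, hu⟩, hvC, hv⟩ := hout
  have hsum := hx.one_le_add u v huv
  have hu_half : x u = 1 / 2 := by linarith
  have hv_half : x v = 1 / 2 := by linarith
  exact (hC u v hu_half hv_half huv).elim huC hvC

theorem IsFractionalVertexCover_s12.add_smul_exchangeDirection [DecidableEq V]
    (hx : IsFractionalVertexCover_s12 G x) {C : Finset V} (hC : G.IsVertexCover C) {ε : K}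
    (hε : 0 ≤ ε) (hε_le : ∀ v, 1 / 2 < x v → ε ≤ x v - 1 / 2) :
    IsFractionalVertexCover_s12 G (x + ε • exchangeDirection x C) where
  nonneg v := by
    have := hx.nonneg v
    have := hε_le v
    simp only [exchangeDirection, Pi.add_apply, Pi.smul_apply, smul_eq_mul]
    split_ifs <;> grind
  one_le_add u v huv := by
    have := hx.one_le_add u v huv
    have := hε_le u
    have := hε_le v
    have : u ∈ C ∨ v ∈ C := hC huv
    simp only [exchangeDirection, Pi.add_apply, Pi.smul_apply, smul_eq_mul]
    split_ifs <;> grind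

variable [Fintype V] {w : V → K}

theorem IsFractionalVertexCover_s12.sum_sdiff_le_sum_filter_lt_half [DecidableEq V]
    (hx : IsFractionalVertexCover_s12 G x)
    (hmin : IsMinOn (w ⬝ᵥ ·) {y | IsFractionalVertexCover_s12 G y} x)
    {C : Finset V} (hC : G.IsVertexCover C) :
    ∑ v ∈ ({v | 1 / 2 < x v} : Finset V) \ C, w v ≤ ∑ v ∈ C with x v < 1 / 2, w v := by
  obtain ⟨ε, hε, hε_le⟩ := exists_pos_forall_le_sub x (1 / 2)
  have hle : w ⬝ᵥ x ≤ w ⬝ᵥ (x + ε • exchangeDirection x C) :=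
    hmin (hx.add_smul_exchangeDirection hC hε.le hε_le)
  rw [dotProduct_add, dotProduct_smul, smul_eq_mul, le_add_iff_nonneg_right,
    mul_nonneg_iff_of_pos_left hε, dotProduct_exchangeDirection] at hle
  exact sub_nonneg.1 hle

theorem IsFractionalVertexCover_s12.sum_filter_eq_half_add_sum_le (hx : IsFractionalVertexCover_s12 G x)
    (hmin : IsMinOn (w ⬝ᵥ ·) {y | IsFractionalVertexCover_s12 G y} x)
    {C : Finset V} (hC : G.IsVertexCover C) :
    ∑ v ∈ C with x v = 1 / 2, w v + ∑ v with 1 / 2 < x v, w v ≤ ∑ v ∈ C, w v := by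
  classical
  have hinter : ({v | 1 / 2 < x v} : Finset V) ∩ C = {v ∈ C | 1 / 2 < x v} := by
    ext; simp [and_comm]
  calc ∑ v ∈ C with x v = 1 / 2, w v + ∑ v with 1 / 2 < x v, w v
    _ = ∑ v ∈ ({v | 1 / 2 < x v} : Finset V) \ C, w v + ∑ v ∈ C with x v = 1 / 2, w v
          + ∑ v ∈ C with 1 / 2 < x v, w v := by
      rw [← sum_inter_add_sum_sdiff {v | 1 / 2 < x v} C, hinter]
      abel
    _ ≤ ∑ v ∈ C with x v < 1 / 2, w v + ∑ v ∈ C with x v = 1 / 2, w v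
          + ∑ v ∈ C with 1 / 2 < x v, w v := by
      gcongr ?_ + _ + _
      exact hx.sum_sdiff_le_sum_filter_lt_half hmin hC
    _ = ∑ v ∈ C, w v := sum_filter_lt_add_eq_add_gt C x (1 / 2) w

end FractionalVertexCover

theorem vcStar_eq_induced_vcStar_add_weight_V1_general {V K : Type*} [Fintype V] [Field K]
    [LinearOrder K] [IsStrictOrderedRing K] {G : SimpleGraph V} {w x : V → K}
    (hx : IsFractionalVertexCover_s12 G x)
    (hmin : IsMinOn (w ⬝ᵥ ·) {y | IsFractionalVertexCover_s12 G y} x) {V12 V1 : Finset V}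
    (hV12 : ∀ v, v ∈ V12 ↔ x v = 1 / 2) (hV1 : ∀ v, v ∈ V1 ↔ 1 / 2 < x v) {vcH : K}
    (hvcH : IsLeast {r | ∃ C ⊆ V12, IsVertexCoverWithin G V12 C ∧ r = ∑ v ∈ C, w v} vcH) :
    IsLeast {r | ∃ C : Finset V, G.IsVertexCover C ∧ r = ∑ v ∈ C, w v}
      (vcH + ∑ v ∈ V1, w v) := by
  classical
  obtain rfl : V12 = ({v | x v = 1 / 2} : Finset V) := by ext v; simp [hV12]
  obtain rfl : V1 = ({v | 1 / 2 < x v} : Finset V) := by ext v; simp [hV1]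
  refine ⟨?_, ?_⟩
  · obtain ⟨C, hC_sub, hC, rfl⟩ := hvcH.1
    have hdisj : Disjoint C ({v | 1 / 2 < x v} : Finset V) :=
      disjoint_of_subset_left hC_sub (disjoint_filter.2 fun _ _ => Eq.not_gt)
    refine ⟨C ∪ ({v | 1 / 2 < x v} : Finset V), ?_, (sum_union hdisj).symm⟩
    simpa using hx.isVertexCover_union (by simpa using hC)
  · rintro _ ⟨C, hC, rfl⟩
    have hcover : IsVertexCoverWithin G {v | x v = 1 / 2} {v ∈ C | x v = 1 / 2} :=
      .of_isVertexCover hC _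
    have hrestrict : vcH ≤ ∑ v ∈ C with x v = 1 / 2, w v :=
      hvcH.2 ⟨_, filter_subset_filter _ (subset_univ C), by simpa using hcover, rfl⟩
    exact (add_le_add_left hrestrict _).trans (hx.sum_filter_eq_half_add_sum_le hmin hC)

/-- For an optimal half-integral LP solution `x` with level sets
`V_{1/2}, V₁`, one has `vc*(G) = vc*(G[V_{1/2}]) + w(V₁)`. -/
theorem vcStar_eq_induced_vcStar_add_weight_V1 {V : Type*} [Fintype V] [DecidableEq V]
    (G : SimpleGraph V) (w : V → ℝ) (hw : ∀ v, 0 < w v)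
    (x : V → ℝ)
    (hx0 : ∀ v, 0 ≤ x v)
    (hxE : ∀ u v, G.Adj u v → 1 ≤ x u + x v)
    (hHalf : ∀ v, x v = 0 ∨ x v = 1/2 ∨ x v = 1)
    (hopt : ∀ y : V → ℝ, (∀ v, 0 ≤ y v) → (∀ u v, G.Adj u v → 1 ≤ y u + y v) →
      ∑ v, w v * x v ≤ ∑ v, w v * y v)
    (V12 V1 : Finset V)
    (hV12 : ∀ v, v ∈ V12 ↔ x v = 1/2)
    (hV1 : ∀ v, v ∈ V1 ↔ x v = 1)
    (vcG vcH : ℝ)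
    (hvcG : IsLeast {r : ℝ | ∃ C : Finset V,
      (∀ u v, G.Adj u v → u ∈ C ∨ v ∈ C) ∧ r = ∑ v ∈ C, w v} vcG)
    (hvcH : IsLeast {r : ℝ | ∃ C : Finset V, C ⊆ V12 ∧
      (∀ u v, u ∈ V12 → v ∈ V12 → G.Adj u v → u ∈ C ∨ v ∈ C) ∧
      r = ∑ v ∈ C, w v} vcH) :
    vcG = vcH + ∑ v ∈ V1, w v := by
  have hV1_gt : ∀ v, v ∈ V1 ↔ 1 / 2 < x v := fun v => by
    rcases hHalf v with h | h | h <;> norm_num [hV1, h]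
  exact hvcG.unique (vcStar_eq_induced_vcStar_add_weight_V1_general ⟨hx0, hxE⟩
    (fun y hy => hopt y hy.nonneg hy.one_le_add) hV12 hV1_gt hvcH)
end
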